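/- Let f : 𝕋 × ℝ^d → ℝ^d be continuous in θ, continuously differentiable in u (jointly continuously), and 1-periodic in θ; write ⟨f⟩(u) = ∫₀¹ f_θ(u) dθ. Let ε > 0 and let Φ : 𝕋 × ℝ^d → ℝ^d be continuously differentiable in (θ,u) and 1-periodic in θ, such that ⟨Φ⟩ : ℝ^d → ℝ^d is a C¹ diffeomorphism of ℝ^d with ∂_u⟨Φ⟩(u) invertible for all u. Define F(u) = (∂_u⟨Φ⟩(u))^{-1} ⟨f∘Φ⟩(u), the defect δ_θ(u) = (1/ε)∂_θΦ_θ(u) + ∂_uΦ_θ(u) F(u) − f_θ(Φ_θ(u)), and set Φ̃_θ = Φ_θ ∘ ⟨Φ⟩^{-1}, F̃(u) = (∂_u⟨Φ̃⟩(u))^{-1} ⟨f∘Φ̃⟩(u), δ̃_θ(u) = (1/ε)∂_θΦ̃_θ(u) + ∂_uΦ̃_θ(u) F̃(u) − f_θ(Φ̃_θ(u)). Then ⟨Φ̃⟩ = id on ℝ^d and δ̃_θ = δ_θ ∘ ⟨Φ⟩^{-1} for every θ ∈ 𝕋. -/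

import Mathlib

open Set

/-- θ-average `⟨g⟩(u) = ∫₀¹ g_θ(u) dθ`. -/
noncomputable def thAvg (d : ℕ) (g : ℝ → (Fin d → ℝ) → (Fin d → ℝ))
    (u : Fin d → ℝ) : Fin d → ℝ :=
  ∫ θ in (0:ℝ)..1, g θ u

/-- Averaged vector field `F(u) = (∂_u⟨Φ⟩(u))⁻¹ ⟨f∘Φ⟩(u)`. -/
noncomputable def aveField (d : ℕ) (f Φ : ℝ → (Fin d → ℝ) → (Fin d → ℝ))
    (u : Fin d → ℝ) : Fin d → ℝ :=
  (fderiv ℝ (thAvg d Φ) u).inverse (thAvg d (fun θ v => f θ (Φ θ v)) u)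

/-- The defect `δ_θ(u) = (1/ε)∂_θΦ_θ(u) + ∂_uΦ_θ(u) F(u) − f_θ(Φ_θ(u))`. -/
noncomputable def defect (d : ℕ) (f Φ : ℝ → (Fin d → ℝ) → (Fin d → ℝ))
    (ε θ : ℝ) (u : Fin d → ℝ) : Fin d → ℝ :=
  (1/ε) • deriv (fun τ => Φ τ u) θ
    + fderiv ℝ (Φ θ) u (aveField d f Φ u)
    - f θ (Φ θ u)

/-!
Write `A = ⟨Φ⟩` and `Ψ = A⁻¹`. Substituting `w = Ψ u` commutes with averaging in `θ`, so
`⟨Φ̃⟩ = A ∘ Ψ = id` and `F̃ = ⟨f ∘ Φ⟩ ∘ Ψ`. Since `DΨ(u) = (DA(Ψ u))⁻¹`, this reads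
`DΨ(u) F̃(u) = F(Ψ u)`: the fields `F̃` and `F` are conjugate by `Ψ`. By the chain rule
`∂_uΦ̃_θ(u) F̃(u) = ∂_uΦ_θ(Ψ u) F(Ψ u)`, and the other two terms of the defect do not
involve `DΨ`.
-/

open Filter MeasureTheory Topology

theorem eventually_forall_norm_lt_of_isCompact {X Y F : Type*} [TopologicalSpace X]
    [TopologicalSpace Y] [SeminormedAddGroup F] {G : Y → X → F} {K : Set Y} (hK : IsCompact K)
    (hG : Continuous (Function.uncurry G)) (x₀ : X) :
    ∃ C, ∀ᶠ x in 𝓝 x₀, ∀ y ∈ K, ‖G y x‖ < C := by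
  obtain ⟨C, hC⟩ := hK.exists_bound_of_continuousOn
    (hG.comp (Continuous.prodMk_left x₀)).continuousOn
  refine ⟨C + 1, hK.eventually_forall_of_forall_eventually fun y hy => ?_⟩
  have hcont : Continuous fun p : X × Y => ‖G p.2 p.1‖ := (hG.comp continuous_swap).norm
  exact hcont.continuousAt.eventually_lt_const ((hC y hy).trans_lt (lt_add_one C))

theorem hasFDerivAt_intervalIntegral_of_continuous_fderiv {𝕜 E F : Type*} [RCLike 𝕜]
    [NormedAddCommGroup E] [NormedSpace 𝕜 E]
    [NormedAddCommGroup F] [NormedSpace ℝ F] [NormedSpace 𝕜 F]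
    {μ : Measure ℝ} [IsLocallyFiniteMeasure μ] {g : ℝ → E → F}
    (hcont : ∀ u, Continuous fun t => g t u) (hdiff : ∀ t, Differentiable 𝕜 (g t))
    (hfderiv : Continuous fun p : ℝ × E => fderiv 𝕜 (g p.1) p.2) (a b : ℝ) (u₀ : E) :
    HasFDerivAt (fun u => ∫ t in a..b, g t u ∂μ) (∫ t in a..b, fderiv 𝕜 (g t) u₀ ∂μ) u₀ := by
  obtain ⟨C, hC⟩ := eventually_forall_norm_lt_of_isCompact
    (G := fun t u => fderiv 𝕜 (g t) u) (isCompact_uIcc (a := a) (b := b)) hfderiv u₀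
  have hfderiv₀ : Continuous fun t => fderiv 𝕜 (g t) u₀ :=
    hfderiv.comp (Continuous.prodMk_left u₀)
  exact intervalIntegral.hasFDerivAt_integral_of_dominated_of_fderiv_le (bound := fun _ => C) hC
    (.of_forall fun u => (hcont u).aestronglyMeasurable)
    ((hcont u₀).intervalIntegrable a b) hfderiv₀.aestronglyMeasurable
    (.of_forall fun t ht u hu => (hu t (uIoc_subset_uIcc ht)).le)
    intervalIntegrable_const (.of_forall fun t _ u _ => (hdiff t u).hasFDerivAt)

theorem fderiv_eq_inverse_fderiv_of_eventually {𝕜 E F : Type*} [NontriviallyNormedField 𝕜]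
    [NormedAddCommGroup E] [NormedSpace 𝕜 E] [NormedAddCommGroup F] [NormedSpace 𝕜 F]
    {A : E → F} {Ψ : F → E} {u : F}
    (hA : DifferentiableAt 𝕜 A (Ψ u)) (hΨ : DifferentiableAt 𝕜 Ψ u)
    (hleft : ∀ᶠ w in 𝓝 (Ψ u), Ψ (A w) = w) (hright : ∀ᶠ v in 𝓝 u, A (Ψ v) = v) :
    fderiv 𝕜 Ψ u = (fderiv 𝕜 A (Ψ u)).inverse := by
  have hAΨ : A (Ψ u) = u := hright.self_of_nhds
  have hfderiv_right : fderiv 𝕜 A (Ψ u) ∘L fderiv 𝕜 Ψ u = .id 𝕜 F := by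
    rw [← fderiv_comp u hA hΨ]
    exact (EventuallyEq.fderiv_eq hright).trans fderiv_id
  have hfderiv_left : fderiv 𝕜 Ψ u ∘L fderiv 𝕜 A (Ψ u) = .id 𝕜 E := by
    have hchain := fderiv_comp (Ψ u) (hAΨ.symm ▸ hΨ) hA
    rw [hAΨ] at hchain
    exact hchain.symm.trans ((EventuallyEq.fderiv_eq hleft).trans fderiv_id)
  exact (ContinuousLinearMap.inverse_eq hfderiv_right hfderiv_left).symm

section Averaging

variable {E F : Type*} [NormedAddCommGroup E] [NormedSpace ℝ E]
  [NormedAddCommGroup F] [NormedSpace ℝ F]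

/-- The average `⟨g⟩(u) = ∫₀¹ g_θ(u) dθ` of a family of maps between normed spaces; `thAvg` is
the case `E = F = ℝ^d`. -/
noncomputable def thetaAverage (g : ℝ → E → F) (u : E) : F :=
  ∫ θ in (0 : ℝ)..1, g θ u

/-- The averaged vector field `F(u) = (∂_u⟨Φ⟩(u))⁻¹ ⟨f∘Φ⟩(u)` on a normed space, generalizing
`aveField`; `E` carries the averaged dynamics and `F` the original one. -/
noncomputable def averagedField (f : ℝ → F → F) (Φ : ℝ → E → F) (u : E) : E :=
  (fderiv ℝ (thetaAverage Φ) u).inverse (thetaAverage (fun θ v => f θ (Φ θ v)) u)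

/-- The defect `δ_θ(u) = ω ∂_θΦ_θ(u) + ∂_uΦ_θ(u) F(u) − f_θ(Φ_θ(u))` of the change of variables
`Φ` on a normed space. The frequency `ω` stands for the `1/ε` of `defect`. -/
noncomputable def averagingDefect (ω : ℝ) (f : ℝ → F → F) (Φ : ℝ → E → F) (θ : ℝ) (u : E) : F :=
  ω • deriv (fun τ => Φ τ u) θ + fderiv ℝ (Φ θ) u (averagedField f Φ u) - f θ (Φ θ u)

theorem differentiable_thetaAverage {g : ℝ → E → F} (hg : ContDiff ℝ 1 (Function.uncurry g)) :
    Differentiable ℝ (thetaAverage g) := by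
  have hcont (u : E) : Continuous fun θ => g θ u :=
    hg.continuous.comp (Continuous.prodMk_left u)
  have hdiff (θ : ℝ) : Differentiable ℝ (g θ) :=
    (hg.comp (contDiff_prodMk_right θ)).differentiable one_ne_zero
  have hfderiv : Continuous fun p : ℝ × E => fderiv ℝ (g p.1) p.2 :=
    (ContDiff.fderiv (f := fun p : ℝ × E => g p.1) (m := 1) (n := 0)
      (hg.comp (contDiff_fst.fst.prodMk contDiff_snd)) contDiff_snd (zero_add 1).le).continuous
  exact fun u =>
    (hasFDerivAt_intervalIntegral_of_continuous_fderiv hcont hdiff hfderiv 0 1 u).differentiableAt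

theorem fderiv_averagedField_comp_localInverse {f : ℝ → F → F} {Φ : ℝ → E → F} {Ψ : F → E} {u : F}
    (hA : DifferentiableAt ℝ (thetaAverage Φ) (Ψ u)) (hΨ : DifferentiableAt ℝ Ψ u)
    (hleft : ∀ᶠ w in 𝓝 (Ψ u), Ψ (thetaAverage Φ w) = w)
    (hright : ∀ᶠ v in 𝓝 u, thetaAverage Φ (Ψ v) = v) :
    fderiv ℝ Ψ u (averagedField f (fun θ v => Φ θ (Ψ v)) u) = averagedField f Φ (Ψ u) := by
  have hfderiv_id : fderiv ℝ (thetaAverage fun θ v => Φ θ (Ψ v)) u = .id ℝ F :=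
    (EventuallyEq.fderiv_eq hright).trans fderiv_id
  have hfield : averagedField f (fun θ v => Φ θ (Ψ v)) u =
      thetaAverage (fun θ w => f θ (Φ θ w)) (Ψ u) := by
    rw [averagedField, hfderiv_id, ContinuousLinearMap.inverse_id]
    rfl
  rw [hfield, fderiv_eq_inverse_fderiv_of_eventually hA hΨ hleft hright, averagedField]

theorem averagingDefect_comp {G : Type*} [NormedAddCommGroup G] [NormedSpace ℝ G]
    {f : ℝ → F → F} {Φ : ℝ → E → F} {Ψ : G → E} {θ : ℝ} {u : G} (ω : ℝ)
    (hΦ : DifferentiableAt ℝ (Φ θ) (Ψ u)) (hΨ : DifferentiableAt ℝ Ψ u)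
    (hfield : fderiv ℝ Ψ u (averagedField f (fun τ v => Φ τ (Ψ v)) u) = averagedField f Φ (Ψ u)) :
    averagingDefect ω f (fun τ v => Φ τ (Ψ v)) θ u = averagingDefect ω f Φ θ (Ψ u) := by
  have hchain : fderiv ℝ (fun v => Φ θ (Ψ v)) u = fderiv ℝ (Φ θ) (Ψ u) ∘L fderiv ℝ Ψ u :=
    fderiv_comp u hΦ hΨ
  rw [averagingDefect, hchain, ContinuousLinearMap.comp_apply, hfield, averagingDefect]

theorem statement12_general {f : ℝ → F → F} {Φ : ℝ → E → F} {Ψ : F → E} (ω : ℝ)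
    (_hf : ∀ u, IntervalIntegrable (fun θ => f θ (Φ θ u)) volume 0 1)
    (hΦ : ContDiff ℝ 1 (Function.uncurry Φ)) (hΨ : Differentiable ℝ Ψ)
    (hleft : Function.LeftInverse Ψ (thetaAverage Φ))
    (hright : Function.RightInverse Ψ (thetaAverage Φ)) :
    (∀ u, thetaAverage (fun θ v => Φ θ (Ψ v)) u = u) ∧
    ∀ θ u, averagingDefect ω f (fun τ v => Φ τ (Ψ v)) θ u = averagingDefect ω f Φ θ (Ψ u) := by
  refine ⟨hright, fun θ u => averagingDefect_comp ω ?_ (hΨ u) ?_⟩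
  · exact (hΦ.comp (contDiff_prodMk_right θ)).differentiable one_ne_zero (Ψ u)
  · exact fderiv_averagedField_comp_localInverse (differentiable_thetaAverage hΦ (Ψ u)) (hΨ u)
      (.of_forall hleft) (.of_forall hright)

end Averaging

/-- Relating stroboscopic to standard averaging: setting `Φ̃_θ = Φ_θ ∘ ⟨Φ⟩⁻¹`, one has
`⟨Φ̃⟩ = id` and the defects satisfy `δ̃_θ = δ_θ ∘ ⟨Φ⟩⁻¹`. -/
theorem statement12 (d : ℕ)
    (f : ℝ → (Fin d → ℝ) → (Fin d → ℝ))
    (hfcont : Continuous fun p : ℝ × (Fin d → ℝ) => f p.1 p.2)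
    (hfdiff : ∀ θ, ContDiff ℝ 1 (f θ))
    (hfdcont : Continuous fun p : ℝ × (Fin d → ℝ) => fderiv ℝ (f p.1) p.2)
    (hfper : ∀ u, Function.Periodic (fun θ => f θ u) 1)
    (ε : ℝ) (hε : 0 < ε)
    (Φ : ℝ → (Fin d → ℝ) → (Fin d → ℝ))
    (hΦ : ContDiff ℝ 1 fun p : ℝ × (Fin d → ℝ) => Φ p.1 p.2)
    (hΦper : ∀ u, Function.Periodic (fun θ => Φ θ u) 1)
    -- ⟨Φ⟩ is a C¹ diffeomorphism of ℝ^d with inverse Ψ and invertible derivative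
    (Ψ : (Fin d → ℝ) → (Fin d → ℝ)) (hΨ : ContDiff ℝ 1 Ψ)
    (hΨl : ∀ u, Ψ (thAvg d Φ u) = u)
    (hΨr : ∀ u, thAvg d Φ (Ψ u) = u)
    (hinv : ∀ u, ∃ e : (Fin d → ℝ) ≃L[ℝ] (Fin d → ℝ),
      (e : (Fin d → ℝ) →L[ℝ] (Fin d → ℝ)) = fderiv ℝ (thAvg d Φ) u) :
    -- ⟨Φ̃⟩ = id
    (∀ u, thAvg d (fun θ w => Φ θ (Ψ w)) u = u) ∧
    -- δ̃_θ = δ_θ ∘ ⟨Φ⟩⁻¹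
    (∀ θ : ℝ, ∀ u : Fin d → ℝ,
      defect d f (fun τ w => Φ τ (Ψ w)) ε θ u = defect d f Φ ε θ (Ψ u)) := by
  have hfΦ (u : Fin d → ℝ) : Continuous fun θ => f θ (Φ θ u) :=
    hfcont.comp (continuous_id.prodMk (hΦ.continuous.comp (Continuous.prodMk_left u)))
  exact statement12_general (1 / ε) (fun u => (hfΦ u).intervalIntegrable 0 1) hΦ
    (hΨ.differentiable one_ne_zero) hΨl hΨr
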